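/- Every finite simple connected 4-chordal graph is sequentially distance preserving. That is, if G contains no induced cycle of length 5 or greater, then there is an ordering v_1, …, v_n of V(G) such that for every i ≥ 1 the subgraph induced on {v_{i+1}, …, v_n} is an isometric subgraph of G. -/

import Mathlib

open SimpleGraph

/-- `G[A]` is an isometric subgraph of `G`: it is connected and distances
within `G[A]` agree with distances in `G`. -/
def IsIsomSub {V : Type*} (G : SimpleGraph V) (A : Set V) : Prop :=
  (G.induce A).Connected ∧
    ∀ u v : A, (G.induce A).dist u v = G.dist (u : V) (v : V)

/-- `G` is sequentially distance preserving: there is an ordering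
`v_1, …, v_n` of the vertices (given by `e`, where `v_{j+1} = e j`) such that
for every `i ≥ 1` deleting the first `i` vertices leaves an isometric
subgraph. -/
def SeqDistPres {V : Type*} [Fintype V] (G : SimpleGraph V) : Prop :=
  ∃ e : Fin (Fintype.card V) ≃ V,
    ∀ i : ℕ, 1 ≤ i → i < Fintype.card V →
      IsIsomSub G {v : V | ∃ j : Fin (Fintype.card V), i ≤ (j : ℕ) ∧ e j = v}

/-!
A vertex `v` of `G[A]` can be deleted without changing distances as soon as any two nonadjacent
neighbours of `v` in `A` have another common neighbour in `A`: geodesics are rerouted through it.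
So it suffices to find such a vertex in every nonempty `A`, which is done by induction on `A`.
If `A` is not a clique, let `C ⊆ A` be maximal among the connected sets for which the set `D` of
vertices of `A` outside `C` without neighbour in `C` is nonempty. By maximality, each vertex of
`A \ C` with a neighbour in `C` is adjacent to all of `D`. A vertex `v` that is removable in `D` is
then removable in `A`: the only new nonadjacent pairs are neighbours `a`, `b` of `v` that both have
neighbours in `C`. A shortest path from `a` to `b` through `C` closes up with `v` to an induced
cycle, so it has length two and its midpoint is the common neighbour sought.
-/

section

variable {V : Type*} {G : SimpleGraph V} {A C : Set V} {v : V}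

/-! ### Deleting a removable vertex -/

/-- `v` is removable in `G[A]`: any two nonadjacent neighbours of `v` in `A` have a common
neighbour in `A` other than `v`. This local condition ensures that deleting `v` preserves the
distances of `G[A]`. Membership of `v` in `A` is not part of the definition. -/
def IsRemovable (G : SimpleGraph V) (A : Set V) (v : V) : Prop :=
  (A ∩ G.neighborSet v).Pairwise fun a b ↦
    G.Adj a b ∨ ∃ w ∈ A \ {v}, G.Adj a w ∧ G.Adj w b

/-- The extended-distance form of `IsIsomSub`. It makes no connectedness demand, hence also
applies to the empty set and is inherited when a removable vertex is deleted. -/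
def IsEDistIsometric (G : SimpleGraph V) (A : Set V) : Prop :=
  ∀ u v : A, (G.induce A).edist u v = G.edist (u : V) (v : V)

lemma edist_le_one_of_adj {u v : V} (h : G.Adj u v) : G.edist u v ≤ 1 :=
  edist_le_one_iff_adj_or_eq.mpr (.inl h)

lemma IsRemovable.edist_le_two (hv : IsRemovable G A v) {a b : ↑(A \ {v})}
    (hva : G.Adj v a) (hvb : G.Adj v b) : (G.induce (A \ {v})).edist a b ≤ 2 := by
  by_cases hab : a = b
  · simp [hab]
  rcases hv ⟨a.2.1, hva⟩ ⟨b.2.1, hvb⟩ (Subtype.coe_injective.ne hab) with hadj | ⟨w, hw, haw, hwb⟩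
  · exact (edist_le_one_of_adj (G := G.induce _) hadj).trans one_le_two
  · calc (G.induce (A \ {v})).edist a b
        ≤ (G.induce (A \ {v})).edist a ⟨w, hw⟩ + (G.induce (A \ {v})).edist ⟨w, hw⟩ b :=
          SimpleGraph.edist_triangle
      _ ≤ 1 + 1 := add_le_add (edist_le_one_of_adj haw) (edist_le_one_of_adj hwb)
      _ = 2 := one_add_one_eq_two

lemma IsRemovable.edist_le_length (hv : IsRemovable G A v) {x y : V}
    (hx : x ∈ A \ {v}) (hy : y ∈ A \ {v}) :
    ∀ p : (G.induce A).Walk ⟨x, hx.1⟩ ⟨y, hy.1⟩,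
      (G.induce (A \ {v})).edist ⟨x, hx⟩ ⟨y, hy⟩ ≤ p.length
  | .nil => by simp
  | .cons (v := ⟨z, hzA⟩) hxz p => by
    by_cases hzv : z = v
    · match p with
      | .nil => exact absurd hzv hy.2
      | .cons (v := ⟨z', hz'A⟩) hzz' q =>
        have hvx : G.Adj v x := by rw [← hzv]; exact G.adj_symm hxz
        have hvz' : G.Adj v z' := by rw [← hzv]; exact hzz'
        have hz' : z' ∈ A \ {v} := ⟨hz'A, (G.ne_of_adj hvz').symm⟩
        calc (G.induce (A \ {v})).edist ⟨x, hx⟩ ⟨y, hy⟩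
            ≤ (G.induce (A \ {v})).edist ⟨x, hx⟩ ⟨z', hz'⟩
              + (G.induce (A \ {v})).edist ⟨z', hz'⟩ ⟨y, hy⟩ := SimpleGraph.edist_triangle
          _ ≤ 2 + q.length :=
            add_le_add (hv.edist_le_two hvx hvz') (hv.edist_le_length hz' hy q)
          _ = ((q.cons hzz').cons hxz).length := by
            simp only [Walk.length_cons, Nat.cast_add, Nat.cast_one]; ring
    · have hz : z ∈ A \ {v} := ⟨hzA, hzv⟩
      calc (G.induce (A \ {v})).edist ⟨x, hx⟩ ⟨y, hy⟩
          ≤ (G.induce (A \ {v})).edist ⟨x, hx⟩ ⟨z, hz⟩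
            + (G.induce (A \ {v})).edist ⟨z, hz⟩ ⟨y, hy⟩ := SimpleGraph.edist_triangle
        _ ≤ 1 + p.length := add_le_add (edist_le_one_of_adj hxz) (hv.edist_le_length hz hy p)
        _ = (p.cons hxz).length := by
          rw [Walk.length_cons, Nat.cast_add, Nat.cast_one, add_comm]

lemma edist_map_le {W : Type*} {H : SimpleGraph W} (f : H →g G) (x y : W) :
    G.edist (f x) (f y) ≤ H.edist x y :=
  le_iInf fun p ↦ (p.map f).edist_le.trans_eq (by rw [Walk.length_map])

lemma isEDistIsometric_univ : IsEDistIsometric G Set.univ := fun u v ↦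
  le_antisymm (edist_map_le (induceUnivIso G).symm.toHom u v)
    (edist_map_le (induceUnivIso G).toHom u v)

lemma IsEDistIsometric.sdiff_singleton (hA : IsEDistIsometric G A) (hv : IsRemovable G A v) :
    IsEDistIsometric G (A \ {v}) := by
  rintro ⟨x, hx⟩ ⟨y, hy⟩
  refine le_antisymm ?_ (edist_map_le (Embedding.induce _).toHom _ _)
  calc (G.induce (A \ {v})).edist ⟨x, hx⟩ ⟨y, hy⟩
      ≤ (G.induce A).edist ⟨x, hx.1⟩ ⟨y, hy.1⟩ := le_iInf (hv.edist_le_length hx hy)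
    _ = G.edist x y := hA _ _

lemma IsEDistIsometric.isIsomSub (hA : IsEDistIsometric G A) (hG : G.Preconnected)
    (hne : A.Nonempty) : IsIsomSub G A where
  left :=
    { preconnected := fun u v ↦ edist_ne_top_iff_reachable.mp <| by
        rw [hA u v]
        exact edist_ne_top_iff_reachable.mpr (hG u v)
      nonempty := hne.to_subtype }
  right u v := congrArg ENat.toNat (hA u v)

/-! ### Induced paths and cycles -/

/-- `4`-chordality, stated via induced containment: no cycle of length at least `5` is an
induced subgraph of `G`. -/
def IsFourChordal (G : SimpleGraph V) : Prop :=
  ∀ n, 5 ≤ n → ¬ cycleGraph n ⊴ G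

lemma isFourChordal_of_isEmpty_iso
    (h : ∀ n : ℕ, 5 ≤ n → ∀ s : Set V, IsEmpty ((G.induce s) ≃g cycleGraph n)) :
    IsFourChordal G := fun n hn hcycle ↦
  have ⟨s, ⟨e⟩⟩ := isIndContained_iff_exists_iso_induce.mp hcycle
  (h n hn s).false e.symm

lemma dist_getVert_of_length_eq_dist {u v : V} {p : G.Walk u v} (hp : p.length = G.dist u v)
    {i : ℕ} (hi : i ≤ p.length) : G.dist u (p.getVert i) = i := by
  rw [← length_eq_dist_of_subwalk hp (p.isSubwalk_take i), Walk.take_length, min_eq_left hi]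

lemma exists_pathGraph_embedding_of_reachable {a b : V} (h : G.Reachable a b) :
    ∃ (n : ℕ) (f : pathGraph (n + 1) ↪g G), f 0 = a ∧ f (Fin.last n) = b := by
  obtain ⟨p, hp⟩ := h.exists_walk_length_eq_dist
  have hdist (i : Fin (p.length + 1)) : G.dist a (p.getVert i) = i :=
    dist_getVert_of_length_eq_dist hp i.is_le
  have hinj : Function.Injective fun i : Fin (p.length + 1) ↦ p.getVert i := fun i j hij ↦
    Fin.ext <| by rw [← hdist i, ← hdist j]; exact congrArg _ hij
  refine ⟨p.length, ⟨⟨_, hinj⟩, fun {i j} ↦ ?_⟩, p.getVert_zero, p.getVert_length⟩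
  rw [pathGraph_adj]
  constructor
  · intro hadj
    have hne : (i : ℕ) ≠ j := fun hij ↦ hadj.ne (congrArg p.getVert hij)
    have hdiff := hadj.diff_dist_adj (u := a)
    simp only [Function.Embedding.coeFn_mk, hdist] at hdiff
    lia
  · rintro (hij | hij)
    · simpa [hij] using p.adj_getVert_succ (i := i) (by lia)
    · simpa [hij] using (p.adj_getVert_succ (i := j) (by lia)).symm

lemma cycleGraph_adj_zero_succ {n : ℕ} {i : Fin (n + 1)} :
    (cycleGraph (n + 2)).Adj 0 i.succ ↔ i = 0 ∨ i = Fin.last n := by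
  rw [cycleGraph_adj', Fin.coe_sub_iff_lt.mpr i.succ_pos, sub_zero, Fin.ext_iff, Fin.ext_iff]
  simp only [Fin.val_zero, Fin.val_succ, Fin.val_last]
  lia

lemma cycleGraph_adj_succ_succ {n : ℕ} {i j : Fin (n + 1)} :
    (cycleGraph (n + 2)).Adj i.succ j.succ ↔ (pathGraph (n + 1)).Adj i j := by
  wlog hij : i ≤ j generalizing i j
  · rw [adj_comm, this (le_of_not_ge hij), adj_comm]
  rcases hij.eq_or_lt with rfl | hlt
  · simp only [SimpleGraph.irrefl]
  rw [cycleGraph_adj', pathGraph_adj, Fin.coe_sub_iff_lt.mpr (Fin.succ_lt_succ_iff.mpr hlt),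
    Fin.sub_val_of_le (Fin.succ_le_succ_iff.mpr hij)]
  simp only [Fin.val_succ]
  lia

lemma cycleGraph_isIndContained_of_pathGraph_embedding {n : ℕ} (f : pathGraph (n + 1) ↪g G)
    (hv : v ∉ Set.range f) (hadj : ∀ i, G.Adj v (f i) ↔ i = 0 ∨ i = Fin.last n) :
    cycleGraph (n + 2) ⊴ G := by
  refine ⟨⟨⟨Fin.cons v f, Fin.cons_injective_iff.mpr ⟨hv, f.injective⟩⟩, fun {i j} ↦ ?_⟩⟩
  cases i using Fin.cases <;> cases j using Fin.cases <;>
    simp [hadj, cycleGraph_adj_zero_succ, cycleGraph_adj_succ_succ,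
      G.adj_comm _ v, (cycleGraph (n + 2)).adj_comm (Fin.succ _) 0]

lemma connected_induce_insert {a c : V} (hC : (G.induce C).Preconnected) (hc : c ∈ C)
    (hca : G.Adj c a) : (G.induce (insert a C)).Connected := by
  rw [Set.insert_eq, Set.union_comm]
  exact connected_induce_union hC (by simp [Preconnected.of_subsingleton]) hc rfl hca

lemma exists_pathGraph_embedding_through {a b : V} (hC : (G.induce C).Preconnected)
    (ha : ∃ c ∈ C, G.Adj c a) (hb : ∃ c ∈ C, G.Adj c b) :
    ∃ (n : ℕ) (f : pathGraph (n + 1) ↪g G), f 0 = a ∧ f (Fin.last n) = b ∧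
      ∀ i, i ≠ 0 → i ≠ Fin.last n → f i ∈ C := by
  obtain ⟨c, hc, hca⟩ := ha
  obtain ⟨d, hd, hdb⟩ := hb
  have hconn : (G.induce (insert b (insert a C))).Connected :=
    connected_induce_insert (connected_induce_insert hC hc hca).preconnected
      (Set.mem_insert_of_mem a hd) hdb
  obtain ⟨n, f, hf0, hfn⟩ :=
    exists_pathGraph_embedding_of_reachable (hconn ⟨a, by simp⟩ ⟨b, by simp⟩)
  refine ⟨n, (Embedding.induce _).comp f, congrArg Subtype.val hf0, congrArg Subtype.val hfn,
    fun i hi0 hin ↦ ?_⟩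
  have hia : (f i : V) ≠ a := fun h ↦ hi0 (f.injective (Subtype.ext h |>.trans hf0.symm))
  have hib : (f i : V) ≠ b := fun h ↦ hin (f.injective (Subtype.ext h |>.trans hfn.symm))
  exact ((f i).2.resolve_left hib).resolve_left hia

lemma IsFourChordal.exists_common_neighbor (hG : IsFourChordal G) {a b : V}
    (hC : (G.induce C).Preconnected) (hvC : v ∉ C) (hvn : ∀ c ∈ C, ¬ G.Adj c v)
    (hva : G.Adj v a) (hvb : G.Adj v b) (hab : a ≠ b) (hnab : ¬ G.Adj a b)
    (ha : ∃ c ∈ C, G.Adj c a) (hb : ∃ c ∈ C, G.Adj c b) :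
    ∃ w ∈ C, G.Adj a w ∧ G.Adj w b := by
  obtain ⟨n, f, rfl, rfl, hfC⟩ := exists_pathGraph_embedding_through hC ha hb
  rw [f.map_adj_iff, pathGraph_adj] at hnab
  rcases lt_or_ge n 3 with hn | hn
  · have hn0 : n ≠ 0 := by rintro rfl; exact hab rfl
    have hn1 : n ≠ 1 := by rintro rfl; exact hnab (.inl rfl)
    obtain rfl : n = 2 := by lia
    exact ⟨f 1, hfC 1 (by decide) (by decide), by simp [f.map_adj_iff, pathGraph_adj],
      by simp [f.map_adj_iff, pathGraph_adj]⟩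
  · have hadj i : G.Adj v (f i) ↔ i = 0 ∨ i = Fin.last n := by
      refine ⟨fun h ↦ ?_, ?_⟩
      · by_contra! hi
        exact hvn _ (hfC i hi.1 hi.2) h.symm
      · rintro (rfl | rfl) <;> assumption
    have hv : v ∉ Set.range f := by
      rintro ⟨i, rfl⟩
      exact hvC (hfC i (fun h ↦ hva.ne (congrArg f h)) fun h ↦ hvb.ne (congrArg f h))
    exact absurd (cycleGraph_isIndContained_of_pathGraph_embedding f hv hadj)
      (hG (n + 2) (by lia))

/-! ### Existence of removable vertices -/

lemma IsRemovable.of_isClique (hA : G.IsClique A) : IsRemovable G A v :=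
  (Set.Pairwise.mono Set.inter_subset_left hA).mono' fun _ _ ↦ .inl

/-- The vertices of `A` outside `C` that have no neighbour in `C`. -/
def nonneighborsIn (G : SimpleGraph V) (A C : Set V) : Set V :=
  {d ∈ A | d ∉ C ∧ ∀ c ∈ C, ¬ G.Adj c d}

/-- The connected subsets of `A` with a nonneighbour in `A`; the existence of a removable vertex
is read off a maximal one. -/
def IsConnectedWithNonneighbor (G : SimpleGraph V) (A C : Set V) : Prop :=
  C ⊆ A ∧ (G.induce C).Connected ∧ (nonneighborsIn G A C).Nonempty

lemma exists_isConnectedWithNonneighbor (hA : ¬ G.IsClique A) :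
    ∃ C, IsConnectedWithNonneighbor G A C := by
  simp only [isClique_iff, Set.Pairwise, not_forall] at hA
  obtain ⟨a, ha, b, hb, hab, hnab⟩ := hA
  exact ⟨{a}, by simpa using ha, by simp, b, hb, by simpa using hab.symm,
    by simpa using hnab⟩

lemma adj_of_maximal_isConnectedWithNonneighbor
    (hC : Maximal (IsConnectedWithNonneighbor G A) C) {s c d : V} (hsA : s ∈ A) (hsC : s ∉ C)
    (hc : c ∈ C) (hcs : G.Adj c s) (hd : d ∈ nonneighborsIn G A C) : G.Adj s d := by
  by_contra hsd
  have hds : d ≠ s := by rintro rfl; exact hd.2.2 c hc hcs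
  have hins : IsConnectedWithNonneighbor G A (insert s C) :=
    ⟨Set.insert_subset hsA hC.prop.1, connected_induce_insert hC.prop.2.1.preconnected hc hcs,
      d, hd.1, by simp [hds, hd.2.1], by simpa [hsd] using hd.2.2⟩
  exact hsC (hC.le_of_ge hins (Set.subset_insert s C) (Set.mem_insert s C))

lemma IsFourChordal.isRemovable_of_nonneighborsIn (hG : IsFourChordal G)
    (hC : Maximal (IsConnectedWithNonneighbor G A) C) (hvD : v ∈ nonneighborsIn G A C)
    (hv : IsRemovable G (nonneighborsIn G A C) v) : IsRemovable G A v := by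
  have ⟨hCA, hCconn, _⟩ := hC.prop
  have ⟨_, hvC, hvn⟩ := hvD
  have hcases {a : V} (ha : a ∈ A ∩ G.neighborSet v) :
      a ∈ nonneighborsIn G A C ∨ a ∉ C ∧ ∃ c ∈ C, G.Adj c a := by
    have haC : a ∉ C := fun h ↦ hvn a h ha.2.symm
    by_cases h : ∃ c ∈ C, G.Adj c a
    · exact .inr ⟨haC, h⟩
    · exact .inl ⟨ha.1, haC, by simpa using h⟩
  intro a ha b hb hab
  refine or_iff_not_imp_left.mpr fun hnab ↦ ?_
  rcases hcases ha with haD | ⟨haC, c, hc, hca⟩ <;> rcases hcases hb with hbD | ⟨hbC, d, hd, hdb⟩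
  · obtain ⟨w, hw, hawb⟩ := (hv ⟨haD, ha.2⟩ ⟨hbD, hb.2⟩ hab).resolve_left hnab
    exact ⟨w, ⟨hw.1.1, hw.2⟩, hawb⟩
  · exact absurd (adj_of_maximal_isConnectedWithNonneighbor hC hb.1 hbC hd hdb haD).symm hnab
  · exact absurd (adj_of_maximal_isConnectedWithNonneighbor hC ha.1 haC hc hca hbD) hnab
  · obtain ⟨w, hw, hawb⟩ := hG.exists_common_neighbor hCconn.preconnected hvC hvn ha.2 hb.2 hab hnab
      ⟨c, hc, hca⟩ ⟨d, hd, hdb⟩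
    exact ⟨w, ⟨hCA hw, ne_of_mem_of_not_mem hw hvC⟩, hawb⟩

theorem IsFourChordal.exists_isRemovable [Finite V] (hG : IsFourChordal G) (hA : A.Nonempty) :
    ∃ v ∈ A, IsRemovable G A v := by
  induction A using WellFoundedLT.induction with
  | ind A ih =>
  by_cases hclique : G.IsClique A
  · exact ⟨hA.some, hA.some_mem, .of_isClique hclique⟩
  · obtain ⟨C₀, hC₀⟩ := exists_isConnectedWithNonneighbor hclique
    obtain ⟨C, -, hC⟩ := Finite.exists_le_maximal hC₀
    have ⟨hCA, hCconn, hD⟩ := hC.prop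
    have hlt : nonneighborsIn G A C < A :=
      (Set.ssubset_iff_of_subset fun _ h ↦ h.1).mpr <|
        have ⟨c, hc⟩ := Set.nonempty_coe_sort.mp hCconn.nonempty
        ⟨c, hCA hc, fun h ↦ h.2.1 hc⟩
    obtain ⟨v, hvD, hv⟩ := ih _ hlt hD
    exact ⟨v, hvD.1, hG.isRemovable_of_nonneighborsIn hC hvD hv⟩

/-! ### Elimination orderings -/

lemma exists_injective_fin_forall_tail {α : Type*} {P : Set α → Prop}
    (hstep : ∀ A, A.Nonempty → P A → ∃ v ∈ A, P (A \ {v})) :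
    ∀ {n : ℕ} {A : Set α}, A.encard = n → P A →
      ∃ f : Fin n → α, Function.Injective f ∧ Set.range f = A ∧
        ∀ i : ℕ, P {v | ∃ j : Fin n, i ≤ j ∧ f j = v}
  | 0, A, hcard, hA => by
    obtain rfl : A = ∅ := by simpa using hcard
    exact ⟨Fin.elim0, fun i ↦ i.elim0, by simp, by simpa using hA⟩
  | n + 1, A, hcard, hA => by
    obtain ⟨v, hvA, hPv⟩ := hstep A (Set.encard_ne_zero.mp (by simp [hcard])) hA
    have hcard' : (A \ {v}).encard = n := by
      rw [Set.encard_sdiff_singleton_of_mem hvA, hcard]; norm_cast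
    obtain ⟨f, hf, hrange, hP⟩ := exists_injective_fin_forall_tail hstep hcard' hPv
    have hrange' : Set.range (Fin.cons v f : Fin (n + 1) → α) = A := by
      rw [Fin.range_cons, hrange, Set.insert_sdiff_singleton, Set.insert_eq_of_mem hvA]
    refine ⟨Fin.cons v f, Fin.cons_injective_iff.mpr ⟨by simp [hrange], hf⟩, hrange', fun i ↦ ?_⟩
    cases i with
    | zero => simpa [← hrange', Set.range] using hA
    | succ i => simpa [Fin.exists_fin_succ] using hP i

theorem exists_equiv_fin_forall_tail {α : Type*} [Fintype α] {P : Set α → Prop}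
    (huniv : P Set.univ) (hstep : ∀ A, A.Nonempty → P A → ∃ v ∈ A, P (A \ {v})) :
    ∃ e : Fin (Fintype.card α) ≃ α,
      ∀ i : ℕ, P {v | ∃ j : Fin (Fintype.card α), i ≤ j ∧ e j = v} := by
  obtain ⟨f, hf, hrange, hP⟩ := exists_injective_fin_forall_tail hstep
    (n := Fintype.card α) (by simp) huniv
  exact ⟨.ofBijective f ⟨hf, Set.range_eq_univ.mp hrange⟩, hP⟩

end

/-- Every finite simple connected graph with no induced cycle of length `5`
or greater (i.e. every `4`-chordal graph) is sequentially distance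
preserving. -/
theorem four_chordal_implies_sdp {V : Type*} [Fintype V] (G : SimpleGraph V)
    (hG : G.Connected)
    (hchordal : ∀ n : ℕ, 5 ≤ n → ∀ s : Set V,
      IsEmpty ((G.induce s) ≃g cycleGraph n)) :
    SeqDistPres G := by
  have hfour : IsFourChordal G := isFourChordal_of_isEmpty_iso hchordal
  obtain ⟨e, he⟩ := exists_equiv_fin_forall_tail (P := IsEDistIsometric G) isEDistIsometric_univ
    fun A hA hiso ↦
      have ⟨v, hvA, hv⟩ := hfour.exists_isRemovable hA
      ⟨v, hvA, hiso.sdiff_singleton hv⟩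
  exact ⟨e, fun i _ hi ↦ (he i).isIsomSub hG.preconnected ⟨e ⟨i, hi⟩, ⟨i, hi⟩, le_rfl, rfl⟩⟩
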